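/- In the independent interference case t(α,u) = α with K ≥ K_low, let (a°, c°) be an optimal pair and let 0 ≤ u_bot ≤ u_top ≤ v be the constants from the allocation threshold theorem. Defining ψ(α) := u_top if α ≥ v; ψ(α) := α − (v − u_top) if u_bot + v − u_top < α < v; and ψ(α) := 0 if α ≤ u_bot + v − u_top, one has, for almost every (α,u): c°(α,u) = 1 if u_bot < u < ψ(α), and c°(α,u) = 0 otherwise. -/

import Mathlib

open MeasureTheory Set

noncomputable section

namespace Spectrum

/-- The CDF associated with a density via `F x = ∫ s in 0..x, f s`. -/
def CDF (f : ℝ → ℝ) (x : ℝ) : ℝ := ∫ s in (0:ℝ)..x, f s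

/-- `r u = (1 - G u) / g u - u`. -/
def rFun (g : ℝ → ℝ) (u : ℝ) : ℝ := (1 - CDF g u) / g u - u

/-- The lower threshold `K_low` on the cost of inspection. -/
def Klow (f g : ℝ → ℝ) (αstar : ℝ → ℝ) (v : ℝ) : ℝ :=
  (∫ u in (0:ℝ)..v, (1 - CDF f (αstar u)) * (1 - CDF g u - u * g u)) /
  (∫ u in (0:ℝ)..v, (1 - CDF f (αstar u)) * g u)

/-- `f` is a continuous, strictly positive probability density on `[0, b]`. -/
structure IsDensityOn (f : ℝ → ℝ) (b : ℝ) : Prop where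
  cont : ContinuousOn f (Icc 0 b)
  pos : ∀ x ∈ Icc (0:ℝ) b, 0 < f x
  supp : ∀ x, x ∉ Icc (0:ℝ) b → f x = 0
  int_one : (∫ x in (0:ℝ)..b, f x) = 1

/-- The regulator's objective. -/
def J (abar ubar v : ℝ) (f g : ℝ → ℝ) (t : ℝ → ℝ → ℝ) (a : ℝ → ℝ → ℝ) : ℝ :=
  ∫ u in (0:ℝ)..ubar, ∫ α in (0:ℝ)..abar, f α * g u * (min v (t α u) - u) * a α u

/-- Feasibility of an allocation/inspection pair for the regulator's problem. -/
structure Feasible (abar ubar K : ℝ) (f g : ℝ → ℝ) (a c : ℝ → ℝ → ℝ) : Prop where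
  meas_a : Measurable (Function.uncurry a)
  meas_c : Measurable (Function.uncurry c)
  mem_a : ∀ α u, a α u ∈ Icc (0:ℝ) 1
  mem_c : ∀ α u, c α u ∈ Icc (0:ℝ) 1
  budget : (∫ u in (0:ℝ)..ubar, ∫ α in (0:ℝ)..abar, f α * g u * rFun g u * a α u)
      = K * ∫ u in (0:ℝ)..ubar, ∫ α in (0:ℝ)..abar, f α * g u * c α u
  ic : ∀ α u, a α u * (1 - c α u) ≤ a 0 u
  inspect : ∀ α u, c α u ≤ a α u
  u_mono : ∀ α u u', u' ≤ u → a α u ≤ a α u'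
  α_mono0 : ∀ α u, a 0 u ≤ a α u

/-- Optimality for the regulator's problem. -/
def Optimal (abar ubar v K : ℝ) (f g : ℝ → ℝ) (t : ℝ → ℝ → ℝ) (a c : ℝ → ℝ → ℝ) : Prop :=
  Feasible abar ubar K f g a c ∧
  ∀ a' c' : ℝ → ℝ → ℝ, Feasible abar ubar K f g a' c' →
    J abar ubar v f g t a' ≤ J abar ubar v f g t a

/-- The interference is `t(α,u) = α` (independent case, with `α*(u) = u`)
or `t(α,u) = α·u` (power case, with `α*(u) = 1`). -/
def InterferenceSpec (t : ℝ → ℝ → ℝ) (αstar : ℝ → ℝ) : Prop :=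
  ((∀ α u, t α u = α) ∧ (∀ u, αstar u = u)) ∨
  ((∀ α u, t α u = α * u) ∧ (∀ u, αstar u = 1))

/-- The allocation threshold in the independent-interference case. -/
def phiInd (v ubot utop : ℝ) (α : ℝ) : ℝ :=
  if v ≤ α then utop
  else if ubot + v - utop < α then α - (v - utop)
  else ubot

/-- The inspection threshold in the independent-interference case. -/
def psiInd (v ubot utop : ℝ) (α : ℝ) : ℝ :=
  if v ≤ α then utop
  else if ubot + v - utop < α then α - (v - utop)
  else 0

lemma IsDensityOn.integrable {f : ℝ → ℝ} {b : ℝ} (hf : IsDensityOn f b) : Integrable f := by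
  have h1 : IntegrableOn f (Icc 0 b) := hf.cont.integrableOn_compact isCompact_Icc
  refine (integrableOn_iff_integrable_of_support_subset ?_).1 h1
  intro x hx
  by_contra h
  exact hx (hf.supp x h)

lemma IsDensityOn.nonneg {f : ℝ → ℝ} {b : ℝ} (hf : IsDensityOn f b) (x : ℝ) : 0 ≤ f x := by
  by_cases h : x ∈ Icc 0 b
  · exact (hf.pos x h).le
  · exact (hf.supp x h).ge

lemma IsDensityOn.cdf_of_ge {f : ℝ → ℝ} {b : ℝ} (hf : IsDensityOn f b) (x : ℝ) (hx : b ≤ x)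
    (hb : 0 < b) : CDF f x = 1 := by
  have h := intervalIntegral.integral_add_adjacent_intervals (a := 0) (b := b) (c := x) (μ := volume)
    (f := f) hf.integrable.intervalIntegrable hf.integrable.intervalIntegrable
  have h2 : ∫ s in b..x, f s = 0 := by
    rw [intervalIntegral.integral_of_le hx]
    refine setIntegral_eq_zero_of_forall_eq_zero ?_
    intro y hy
    exact hf.supp y (fun h => absurd h.2 (not_le.2 hy.1))
  rw [CDF, ← h, h2, hf.int_one, add_zero]

lemma IsDensityOn.cdf_tail {f : ℝ → ℝ} {b : ℝ} (hf : IsDensityOn f b) (x : ℝ) :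
    ∫ s in x..b, f s = 1 - CDF f x := by
  have h := intervalIntegral.integral_add_adjacent_intervals (a := 0) (b := x) (c := b) (μ := volume)
    (f := f) hf.integrable.intervalIntegrable hf.integrable.intervalIntegrable
  rw [hf.int_one] at h
  rw [CDF]; linarith

lemma IsDensityOn.cdf_lt {f : ℝ → ℝ} {b : ℝ} (hf : IsDensityOn f b) (x : ℝ) (h0 : 0 ≤ x)
    (hx : x < b) : CDF f x < 1 := by
  have h := hf.cdf_tail x
  have : 0 < ∫ s in x..b, f s := by
    refine intervalIntegral.intervalIntegral_pos_of_pos_on hf.integrable.intervalIntegrable ?_ hx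
    intro y hy
    exact hf.pos y ⟨h0.trans hy.1.le, hy.2.le⟩
  linarith

lemma IsDensityOn.cdf_le {f : ℝ → ℝ} {b : ℝ} (hf : IsDensityOn f b) (hb : 0 < b) (x : ℝ)
    (h0 : 0 ≤ x) : CDF f x ≤ 1 := by
  rcases lt_or_ge x b with h | h
  · exact (hf.cdf_lt x h0 h).le
  · exact (hf.cdf_of_ge x h hb).le

lemma IsDensityOn.cdf_cont {f : ℝ → ℝ} {b : ℝ} (hf : IsDensityOn f b) : Continuous (CDF f) :=
  intervalIntegral.continuous_primitive (fun _ _ => hf.integrable.intervalIntegrable) 0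

lemma IsDensityOn.cdf_deriv {f : ℝ → ℝ} {b : ℝ} (hf : IsDensityOn f b) (x : ℝ)
    (hx : x ∈ Ioo 0 b) : HasDerivAt (CDF f) (f x) x := by
  have hc : ContinuousOn f (Ioo 0 b) := hf.cont.mono Ioo_subset_Icc_self
  exact intervalIntegral.integral_hasDerivAt_right hf.integrable.intervalIntegrable
    (hc.stronglyMeasurableAtFilter isOpen_Ioo x hx)
    (hc.continuousAt (isOpen_Ioo.mem_nhds hx))

lemma boxint (abar ubar : ℝ) (ha : 0 ≤ abar) (hu : 0 ≤ ubar) (h : ℝ × ℝ → ℝ)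
    (hint : IntegrableOn h (Icc 0 abar ×ˢ Icc 0 ubar)) :
    ∫ u in (0:ℝ)..ubar, ∫ α in (0:ℝ)..abar, h (α, u) = ∫ p in Icc 0 abar ×ˢ Icc 0 ubar, h p := by
  rw [IntegrableOn, Measure.volume_eq_prod, ← Measure.prod_restrict] at hint
  rw [Measure.volume_eq_prod, ← Measure.prod_restrict, integral_prod_symm _ hint]
  rw [intervalIntegral.integral_of_le hu, integral_Icc_eq_integral_Ioc]
  congr 1
  ext u
  rw [intervalIntegral.integral_of_le ha, integral_Icc_eq_integral_Ioc]

lemma box_integrable {abar ubar : ℝ} {f g : ℝ → ℝ} (hf : IsDensityOn f abar)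
    (hg : IsDensityOn g ubar) (q : ℝ × ℝ → ℝ) (C : ℝ)
    (hq : AEStronglyMeasurable q (volume.restrict (Icc 0 abar ×ˢ Icc 0 ubar)))
    (hC : ∀ p ∈ Icc 0 abar ×ˢ Icc 0 ubar, |q p| ≤ C) :
    IntegrableOn (fun p : ℝ × ℝ => f p.1 * g p.2 * q p) (Icc 0 abar ×ˢ Icc 0 ubar) := by
  have h1 : Integrable (fun p : ℝ × ℝ => f p.1 * g p.2) := by
    rw [Measure.volume_eq_prod]
    exact hf.integrable.mul_prod hg.integrable
  refine Integrable.mul_bdd (c := C) h1.integrableOn hq ?_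
  filter_upwards [ae_restrict_mem (measurableSet_Icc.prod measurableSet_Icc)] with p hp
  exact hC p hp

lemma graph_null (Φ : ℝ → ℝ) (hΦ : Measurable Φ) : ∀ᵐ p : ℝ × ℝ, p.2 ≠ Φ p.1 := by
  have hm : MeasurableSet {p : ℝ × ℝ | p.2 = Φ p.1} :=
    measurableSet_eq_fun measurable_snd (hΦ.comp measurable_fst)
  rw [ae_iff]
  simp only [ne_eq, not_not]
  rw [Measure.volume_eq_prod, Measure.measure_prod_null hm]
  filter_upwards with x
  have : Prod.mk x ⁻¹' {p : ℝ × ℝ | p.2 = Φ p.1} = {Φ x} := by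
    ext y; simp
  rw [this]; simp

/-- numerator -/
def Nn (f g : ℝ → ℝ) (m : ℝ) : ℝ := ∫ u in (0:ℝ)..m, (1 - CDF f u) * (1 - CDF g u - u * g u)
/-- denominator -/
def Dd (f g : ℝ → ℝ) (m : ℝ) : ℝ := ∫ u in (0:ℝ)..m, (1 - CDF f u) * g u

lemma Nn_int {abar ubar : ℝ} {f g : ℝ → ℝ} (hf : IsDensityOn f abar) (hg : IsDensityOn g ubar)
    (x y : ℝ) : IntervalIntegrable (fun u => (1 - CDF f u) * (1 - CDF g u - u * g u)) volume x y := by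
  have := hf.cdf_cont
  have := hg.cdf_cont
  refine IntervalIntegrable.continuousOn_mul ?_ (by fun_prop)
  refine IntervalIntegrable.sub (Continuous.intervalIntegrable (by fun_prop) _ _) ?_
  exact hg.integrable.intervalIntegrable.continuousOn_mul (by fun_prop)

lemma Dd_int {abar ubar : ℝ} {f g : ℝ → ℝ} (hf : IsDensityOn f abar) (hg : IsDensityOn g ubar)
    (x y : ℝ) : IntervalIntegrable (fun u => (1 - CDF f u) * g u) volume x y := by
  have := hf.cdf_cont
  exact hg.integrable.intervalIntegrable.continuousOn_mul (by fun_prop)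

lemma trunc_int {h : ℝ → ℝ} {m v : ℝ} (hmv : m ≤ v) (hi : ∀ x y, IntervalIntegrable h volume x y)
    (h0 : ∀ u, m < u → u ≤ v → h u = 0) : ∫ u in (0:ℝ)..v, h u = ∫ u in (0:ℝ)..m, h u := by
  rw [← intervalIntegral.integral_add_adjacent_intervals (hi 0 m) (hi m v)]
  have : ∫ u in m..v, h u = 0 := by
    rw [intervalIntegral.integral_of_le hmv]
    exact setIntegral_eq_zero_of_forall_eq_zero (fun y hy => h0 y hy.1 hy.2)
  rw [this, add_zero]

lemma Klow_eq {abar ubar v : ℝ} {f g : ℝ → ℝ} (ha : 0 < abar) (hu : 0 < ubar)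
    (hf : IsDensityOn f abar) (hg : IsDensityOn g ubar) :
    Klow f g (fun u => u) v = Nn f g (min v (min abar ubar)) / Dd f g (min v (min abar ubar)) := by
  have hz : ∀ u, min v (min abar ubar) < u → u ≤ v → (1 - CDF f u = 0) ∨ (1 - CDF g u = 0 ∧ g u = 0) := by
    intro u h h'
    rcases lt_or_ge abar u with h2 | h2
    · left; rw [hf.cdf_of_ge u h2.le ha, sub_self]
    · right
      have : ubar < u := by
        rcases min_lt_iff.1 h with h3 | h3
        · linarith
        · rcases min_lt_iff.1 h3 with h4 | h4
          · linarith
          · exact h4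
      exact ⟨by rw [hg.cdf_of_ge u this.le hu, sub_self], hg.supp u (fun h => by linarith [h.2])⟩
  unfold Klow Nn Dd
  rw [trunc_int (min_le_left v (min abar ubar)) (Nn_int hf hg), trunc_int (min_le_left v (min abar ubar)) (Dd_int hf hg)]
  · intro u h h'
    rcases hz u h h' with h | h
    · simp [h]
    · simp [h]
  · intro u h h'
    rcases hz u h h' with h | h
    · simp [h]
    · simp [h]

lemma Dd_pos {abar ubar m : ℝ} {f g : ℝ → ℝ} (hm : 0 < m) (hma : m ≤ abar) (hmu : m ≤ ubar)
    (hf : IsDensityOn f abar) (hg : IsDensityOn g ubar) : 0 < Dd f g m := by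
  refine intervalIntegral.intervalIntegral_pos_of_pos_on (Dd_int hf hg _ _) ?_ hm
  intro x hx
  have := hf.cdf_lt x hx.1.le (hx.2.trans_le hma)
  have := hg.pos x ⟨hx.1.le, hx.2.le.trans hmu⟩
  exact mul_pos (by linarith) this

lemma Nn_pos {abar ubar m : ℝ} {f g : ℝ → ℝ} (hm : 0 < m) (hma : m ≤ abar) (hmu : m ≤ ubar)
    (hf : IsDensityOn f abar) (hg : IsDensityOn g ubar) : 0 < Nn f g m := by
  have cf := hf.cdf_cont
  have cg := hg.cdf_cont
  have key := intervalIntegral.integral_mul_deriv_eq_deriv_mul_of_hasDerivAt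
    (a := 0) (b := m) (u := fun x => 1 - CDF f x) (v := fun x => x * (1 - CDF g x))
    (u' := fun x => - f x) (v' := fun x => 1 - CDF g x - x * g x) (by fun_prop) (by fun_prop)
    (by
      intro x hx
      rw [min_eq_left hm.le, max_eq_right hm.le] at hx
      exact (hf.cdf_deriv x ⟨hx.1, hx.2.trans_le hma⟩).const_sub 1)
    (by
      intro x hx
      rw [min_eq_left hm.le, max_eq_right hm.le] at hx
      have : HasDerivAt (fun x => x * (1 - CDF g x)) (1 * (1 - CDF g x) + x * (- g x)) x :=
        (hasDerivAt_id x).mul ((hg.cdf_deriv x ⟨hx.1, hx.2.trans_le hmu⟩).const_sub 1)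
      exact this.congr_deriv (by ring))
    (hf.integrable.neg.intervalIntegrable)
    (by
      refine IntervalIntegrable.sub (Continuous.intervalIntegrable (by fun_prop) _ _) ?_
      exact hg.integrable.intervalIntegrable.continuousOn_mul (by fun_prop))
  have hpos : 0 < ∫ x in (0:ℝ)..m, f x * (x * (1 - CDF g x)) := by
    refine intervalIntegral.intervalIntegral_pos_of_pos_on
      (hf.integrable.intervalIntegrable.mul_continuousOn (by fun_prop)) ?_ hm
    intro x hx
    have h1 := hg.cdf_lt x hx.1.le (hx.2.trans_le hmu)
    have h2 := hf.pos x ⟨hx.1.le, hx.2.le.trans hma⟩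
    exact mul_pos h2 (mul_pos hx.1 (by linarith))
  have h1 : 0 ≤ (1 - CDF f m) * (m * (1 - CDF g m)) := by
    have := hf.cdf_le (hm.trans_le hma) m hm.le
    have := hg.cdf_le (hm.trans_le hmu) m hm.le
    exact mul_nonneg (by linarith) (mul_nonneg hm.le (by linarith))
  rw [Nn, key]
  simp only [neg_mul, intervalIntegral.integral_neg, zero_mul, mul_zero]
  linarith

lemma IsDensityOn.measurable {f : ℝ → ℝ} {b : ℝ} (hf : IsDensityOn f b) : Measurable f := by
  classical
  have h : f = (Icc 0 b).piecewise f (fun _ => 0) := by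
    ext x
    by_cases hx : x ∈ Icc 0 b
    · simp only [Set.piecewise, hx, if_true]
    · simp only [Set.piecewise, hx, if_false]; exact hf.supp x hx
  rw [h]
  exact hf.cont.measurable_piecewise continuousOn_const measurableSet_Icc

lemma rFun_meas {g : ℝ → ℝ} {b : ℝ} (hg : IsDensityOn g b) : Measurable (rFun g) := by
  unfold rFun
  exact ((measurable_const.sub hg.cdf_cont.measurable).div hg.measurable).sub measurable_id

lemma rFun_bdd {g : ℝ → ℝ} {b : ℝ} (hb : 0 < b) (hr : StrictAntiOn (rFun g) (Icc 0 b)) (u : ℝ)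
    (hu : u ∈ Icc 0 b) : |rFun g u| ≤ |rFun g 0| + |rFun g b| := by
  have h1 := hr.antitoneOn (left_mem_Icc.2 hb.le) hu hu.1
  have h2 := hr.antitoneOn hu (right_mem_Icc.2 hb.le) hu.2
  rw [abs_le]
  constructor
  · linarith [neg_abs_le (rFun g b), abs_nonneg (rFun g 0)]
  · linarith [le_abs_self (rFun g 0), abs_nonneg (rFun g b)]

/-- The interpolated threshold. -/
def PhiE (ubar v ubot utop ε α : ℝ) : ℝ :=
  (1 - ε) * min (phiInd v ubot utop α) ubar + ε * min (min v (max α 0)) ubar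

/-- The interpolated allocation. -/
def aE (ubar v ubot utop ε α u : ℝ) : ℝ := if u < PhiE ubar v ubot utop ε α then 1 else 0

lemma phi_meas (v ubot utop : ℝ) : Measurable (phiInd v ubot utop) := by
  unfold phiInd
  refine Measurable.ite measurableSet_Ici measurable_const ?_
  exact Measurable.ite measurableSet_Ioi (measurable_id.sub measurable_const) measurable_const

lemma PhiE_meas (ubar v ubot utop ε : ℝ) : Measurable (PhiE ubar v ubot utop ε) := by
  have := phi_meas v ubot utop
  unfold PhiE
  fun_prop

lemma aE_meas (ubar v ubot utop ε : ℝ) :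
    Measurable (fun p : ℝ × ℝ => aE ubar v ubot utop ε p.1 p.2) := by
  unfold aE
  exact Measurable.ite (measurableSet_lt measurable_snd
    ((PhiE_meas ubar v ubot utop ε).comp measurable_fst)) measurable_const measurable_const

lemma aE0_meas (ubar v ubot utop ε : ℝ) :
    Measurable (fun p : ℝ × ℝ => aE ubar v ubot utop ε 0 p.2) := by
  unfold aE
  exact Measurable.ite (measurableSet_lt measurable_snd measurable_const)
    measurable_const measurable_const

lemma aE_mem (ubar v ubot utop ε α u : ℝ) : aE ubar v ubot utop ε α u ∈ Icc (0:ℝ) 1 := by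
  unfold aE; split_ifs <;> simp

lemma phi_ge {v ubot utop : ℝ} (h2 : ubot ≤ utop) (α : ℝ) : ubot ≤ phiInd v ubot utop α := by
  unfold phiInd; split_ifs <;> linarith

lemma phi_le {v ubot utop : ℝ} (h3 : utop ≤ v) (α : ℝ) :
    phiInd v ubot utop α ≤ max ubot α := by
  unfold phiInd; split_ifs
  · exact le_max_of_le_right (by linarith)
  · exact le_max_of_le_right (by linarith)
  · exact le_max_left _ _

lemma phi_low {v ubot utop : ℝ} (h2 : ubot ≤ utop) (h3 : utop ≤ v) (α : ℝ) (h : α ≤ ubot)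
    (h' : α < v) : phiInd v ubot utop α = ubot := by
  unfold phiInd
  rw [if_neg (by linarith), if_neg (by linarith)]

lemma PhiE_zero {ubar v ubot utop ε : ℝ} (hu : 0 < ubar) (hv : 0 < v) (h1 : 0 ≤ ubot)
    (h2 : ubot ≤ utop) (h3 : utop ≤ v) :
    PhiE ubar v ubot utop ε 0 = (1 - ε) * min ubot ubar := by
  unfold PhiE
  rw [phi_low h2 h3 0 h1 hv, max_self, min_eq_right hv.le, min_eq_left hu.le, mul_zero, add_zero]

lemma PhiE_mono {ubar v ubot utop ε : ℝ} (hu : 0 < ubar) (hv : 0 < v) (h1 : 0 ≤ ubot)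
    (h2 : ubot ≤ utop) (h3 : utop ≤ v) (he : 0 ≤ ε) (he1 : ε ≤ 1) (α : ℝ) :
    PhiE ubar v ubot utop ε 0 ≤ PhiE ubar v ubot utop ε α := by
  rw [PhiE_zero hu hv h1 h2 h3]
  unfold PhiE
  have a1 : min ubot ubar ≤ min (phiInd v ubot utop α) ubar := min_le_min_right _ (phi_ge h2 α)
  have a2 : 0 ≤ min (min v (max α 0)) ubar := le_min (le_min hv.le (le_max_right _ _)) hu.le
  have := mul_le_mul_of_nonneg_left a1 (sub_nonneg.2 he1)
  have := mul_nonneg he a2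
  linarith

lemma aE_mono0 {ubar v ubot utop ε : ℝ} (hu : 0 < ubar) (hv : 0 < v) (h1 : 0 ≤ ubot)
    (h2 : ubot ≤ utop) (h3 : utop ≤ v) (he : 0 ≤ ε) (he1 : ε ≤ 1) (α u : ℝ) :
    aE ubar v ubot utop ε 0 u ≤ aE ubar v ubot utop ε α u := by
  have := PhiE_mono hu hv h1 h2 h3 he he1 α
  unfold aE
  split_ifs <;> linarith

lemma aE_cont (ubar v ubot utop ε α u : ℝ) (h : u ≠ PhiE ubar v ubot utop ε α) :
    ContinuousAt (fun e => aE ubar v ubot utop e α u) ε := by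
  have hc : Continuous (fun e => PhiE ubar v ubot utop e α) := by
    unfold PhiE; fun_prop
  rcases lt_or_gt_of_ne h with h | h
  · have : (fun e => aE ubar v ubot utop e α u) =ᶠ[nhds ε] fun _ => 1 := by
      filter_upwards [hc.continuousAt.eventually_const_lt h] with e he
      simp only [aE, he, if_true]
    exact continuousAt_const.congr this.symm
  · have : (fun e => aE ubar v ubot utop e α u) =ᶠ[nhds ε] fun _ => 0 := by
      filter_upwards [hc.continuousAt.eventually_lt_const h] with e he
      simp only [aE, not_lt.2 he.le, if_false]
    exact continuousAt_const.congr this.symm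

/-- The integrand factor of the budget surplus. -/
def qE (ubar v ubot utop K : ℝ) (g : ℝ → ℝ) (ε : ℝ) (p : ℝ × ℝ) : ℝ :=
  rFun g p.2 * aE ubar v ubot utop ε p.1 p.2
    - K * (aE ubar v ubot utop ε p.1 p.2 - aE ubar v ubot utop ε 0 p.2)

/-- The budget surplus. -/
def LE' (abar ubar v ubot utop K : ℝ) (f g : ℝ → ℝ) (ε : ℝ) : ℝ :=
  ∫ p in Icc 0 abar ×ˢ Icc 0 ubar, f p.1 * g p.2 * qE ubar v ubot utop K g ε p

lemma qE_meas (ubar v ubot utop K : ℝ) (g : ℝ → ℝ) (hg : IsDensityOn g ubar) (ε : ℝ) :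
    Measurable (qE ubar v ubot utop K g ε) := by
  unfold qE
  have h1 := aE_meas ubar v ubot utop ε
  have h2 := aE0_meas ubar v ubot utop ε
  have h3 := rFun_meas hg
  fun_prop

lemma ra_bdd {ubar : ℝ} {g : ℝ → ℝ} (hu : 0 < ubar)
    (hr : StrictAntiOn (rFun g) (Icc 0 ubar)) (u x : ℝ) (hp : u ∈ Icc 0 ubar)
    (hx : x ∈ Icc (0:ℝ) 1) :
    |rFun g u * x| ≤ |rFun g 0| + |rFun g ubar| := by
  rw [abs_mul, abs_of_nonneg hx.1]
  calc _ ≤ |rFun g u| * 1 := mul_le_mul_of_nonneg_left hx.2 (abs_nonneg _)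
    _ ≤ _ := by rw [mul_one]; exact rFun_bdd hu hr u hp

lemma qE_bdd {ubar v ubot utop K : ℝ} {g : ℝ → ℝ} (hu : 0 < ubar) (hK : 0 ≤ K)
    (hr : StrictAntiOn (rFun g) (Icc 0 ubar)) (ε : ℝ) (p : ℝ × ℝ) (hp : p.2 ∈ Icc 0 ubar) :
    |qE ubar v ubot utop K g ε p| ≤ |rFun g 0| + |rFun g ubar| + K := by
  unfold qE
  have h1 := aE_mem ubar v ubot utop ε p.1 p.2
  have h2 := aE_mem ubar v ubot utop ε 0 p.2
  refine (abs_sub _ _).trans (add_le_add (ra_bdd hu hr _ _ hp h1) ?_)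
  rw [abs_mul, abs_of_nonneg hK]
  have : |aE ubar v ubot utop ε p.1 p.2 - aE ubar v ubot utop ε 0 p.2| ≤ 1 := by
    rw [abs_le]; constructor <;> linarith [h1.1, h1.2, h2.1, h2.2]
  nlinarith

lemma LE_cont {abar ubar v ubot utop K : ℝ} {f g : ℝ → ℝ} (hu : 0 < ubar) (hK : 0 ≤ K)
    (hf : IsDensityOn f abar) (hg : IsDensityOn g ubar)
    (hr : StrictAntiOn (rFun g) (Icc 0 ubar)) :
    Continuous (LE' abar ubar v ubot utop K f g) := by
  rw [continuous_iff_continuousAt]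
  intro ε
  have hM : IntegrableOn (fun p : ℝ × ℝ => f p.1 * g p.2 * (|rFun g 0| + |rFun g ubar| + K))
      (Icc 0 abar ×ˢ Icc 0 ubar) :=
    box_integrable hf hg (fun _ => |rFun g 0| + |rFun g ubar| + K) _
      aestronglyMeasurable_const (fun _ _ => le_rfl)
  refine continuousAt_of_dominated ?_ ?_ hM ?_
  · refine Filter.Eventually.of_forall (fun e => ?_)
    exact (((hf.measurable.comp measurable_fst).mul (hg.measurable.comp measurable_snd)).mul
      (qE_meas ubar v ubot utop K g hg e)).aestronglyMeasurable
  · refine Filter.Eventually.of_forall (fun e => ?_)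
    filter_upwards [ae_restrict_mem (measurableSet_Icc.prod measurableSet_Icc)] with p hp
    rw [norm_mul, norm_mul, Real.norm_of_nonneg (hf.nonneg _), Real.norm_of_nonneg (hg.nonneg _)]
    exact mul_le_mul_of_nonneg_left (qE_bdd hu hK hr e p hp.2)
      (mul_nonneg (hf.nonneg _) (hg.nonneg _))
  · filter_upwards [ae_restrict_of_ae (graph_null _ (PhiE_meas ubar v ubot utop ε)),
      ae_restrict_of_ae (graph_null (fun _ => PhiE ubar v ubot utop ε 0) measurable_const)]
      with p hp1 hp2
    have c1 := aE_cont ubar v ubot utop ε p.1 p.2 hp1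
    have c2 := aE_cont ubar v ubot utop ε 0 p.2 hp2
    unfold qE
    exact continuousAt_const.mul ((continuousAt_const.mul c1).sub
      (continuousAt_const.mul (c1.sub c2)))

lemma feasE {abar ubar v ubot utop K : ℝ} {f g : ℝ → ℝ} (ha : 0 < abar) (hu : 0 < ubar)
    (hv : 0 < v) (h1 : 0 ≤ ubot) (h2 : ubot ≤ utop) (h3 : utop ≤ v)
    (hf : IsDensityOn f abar) (hg : IsDensityOn g ubar)
    (hr : StrictAntiOn (rFun g) (Icc 0 ubar)) (ε : ℝ) (he : 0 ≤ ε) (he1 : ε ≤ 1)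
    (hL : LE' abar ubar v ubot utop K f g ε = 0) :
    Feasible abar ubar K f g (aE ubar v ubot utop ε)
      (fun α u => aE ubar v ubot utop ε α u - aE ubar v ubot utop ε 0 u) := by
  have mono := fun α u => aE_mono0 (ε := ε) hu hv h1 h2 h3 he he1 α u
  have mem := fun α u => aE_mem ubar v ubot utop ε α u
  have ma := aE_meas ubar v ubot utop ε
  have ma0 := aE0_meas ubar v ubot utop ε
  have mr := rFun_meas hg
  refine ⟨ma, ma.sub ma0, mem, ?_, ?_, ?_, ?_, ?_, mono⟩
  · intro α u
    exact ⟨sub_nonneg.2 (mono α u), by linarith [(mem α u).2, (mem 0 u).1]⟩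
  · have i1 := box_integrable hf hg
      (fun p => rFun g p.2 * aE ubar v ubot utop ε p.1 p.2) _
      (by fun_prop) (fun p hp => ra_bdd hu hr _ _ hp.2 (mem _ _))
    have i2 := box_integrable hf hg
      (fun p => aE ubar v ubot utop ε p.1 p.2 - aE ubar v ubot utop ε 0 p.2) 1
      (by fun_prop) (fun p hp => by
        rw [abs_le]
        constructor <;> linarith [(mem p.1 p.2).1, (mem p.1 p.2).2, (mem 0 p.2).1, (mem 0 p.2).2])
    have e1 := boxint abar ubar ha.le hu.le _ i1
    have e2 := boxint abar ubar ha.le hu.le _ i2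
    simp only [← mul_assoc] at e1
    rw [e1, e2, ← integral_const_mul, ← sub_eq_zero, ← integral_sub _ (i2.const_mul K)]
    · refine Eq.trans ?_ hL
      unfold LE' qE
      congr 1
      ext p
      ring
    · simp only [← mul_assoc] at i1
      exact i1
  · intro α u
    have := (mem 0 u).1
    unfold aE at *
    split_ifs at * <;> simp
  · intro α u
    linarith [(mem 0 u).1]
  · intro α u u' huu
    unfold aE
    split_ifs <;> linarith

lemma qE_one {ubar v ubot utop K : ℝ} {g : ℝ → ℝ} (hu : 0 < ubar)
    (hv : 0 < v) (h1 : 0 ≤ ubot) (h2 : ubot ≤ utop) (h3 : utop ≤ v) (α u : ℝ) (hα : 0 ≤ α)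
    (hu0 : 0 ≤ u) : qE ubar v ubot utop K g 1 (α, u) =
      if u < min (min v α) ubar then rFun g u - K else 0 := by
  have e0 : aE ubar v ubot utop 1 0 u = 0 := by
    unfold aE
    rw [PhiE_zero hu hv h1 h2 h3, if_neg (by linarith)]
  simp only [qE, e0]
  simp only [aE, PhiE, max_eq_left hα, sub_self, zero_mul, zero_add, one_mul]
  split_ifs <;> ring

lemma LE_one_inner {abar ubar v ubot utop K : ℝ} {f g : ℝ → ℝ} (ha : 0 < abar) (hu : 0 < ubar)
    (hv : 0 < v) (h1 : 0 ≤ ubot) (h2 : ubot ≤ utop) (h3 : utop ≤ v)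
    (hf : IsDensityOn f abar) (hg : IsDensityOn g ubar) (u : ℝ) (hu0 : u ∈ Ioc 0 ubar) :
    ∫ α in (0:ℝ)..abar, f α * g u * qE ubar v ubot utop K g 1 (α, u) =
      (Iio (min v (min abar ubar))).indicator (fun u => (1 - CDF f u) * (1 - CDF g u - u * g u)
        - K * ((1 - CDF f u) * g u)) u := by
  have e : ∫ α in (0:ℝ)..abar, f α * g u * qE ubar v ubot utop K g 1 (α, u) =
      ∫ α in Ioc 0 abar, (if u < min (min v α) ubar then f α * (g u * (rFun g u - K)) else 0) := by
    rw [intervalIntegral.integral_of_le ha.le]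
    refine setIntegral_congr_fun measurableSet_Ioc ?_
    intro α hα
    simp only
    rw [qE_one hu hv h1 h2 h3 α u hα.1.le hu0.1.le]
    split_ifs <;> ring
  rw [e]
  by_cases hm : u < min v (min abar ubar)
  · rw [indicator_of_mem (by exact hm)]
    have hmv : u < v := hm.trans_le (min_le_left _ _)
    have hma : u < abar := hm.trans_le ((min_le_right _ _).trans (min_le_left _ _))
    have hmu : u < ubar := hm.trans_le ((min_le_right _ _).trans (min_le_right _ _))
    have e2 : ∫ α in Ioc 0 abar, (if u < min (min v α) ubar then f α * (g u * (rFun g u - K)) else 0)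
        = ∫ α in Ioc 0 abar, (Ioi u).indicator (fun α => f α * (g u * (rFun g u - K))) α := by
      congr 1
      ext α
      by_cases h : u < α
      · rw [if_pos (by simp [*]), indicator_of_mem (by exact h)]
      · rw [if_neg (by simp [*]), indicator_of_notMem (by exact h)]
    have e3 : Ioc 0 abar ∩ Ioi u = Ioc u abar := by
      ext x; simp only [mem_inter_iff, mem_Ioc, mem_Ioi]
      constructor
      · rintro ⟨⟨_, _⟩, _⟩; constructor <;> assumption
      · rintro ⟨h, h'⟩; exact ⟨⟨hu0.1.trans h, h'⟩, h⟩
    rw [e2, setIntegral_indicator measurableSet_Ioi, e3, integral_mul_const,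
      ← intervalIntegral.integral_of_le hma.le, hf.cdf_tail]
    have hgp := hg.pos u ⟨hu0.1.le, hu0.2⟩
    unfold rFun
    field_simp
  · rw [indicator_of_notMem (by exact hm)]
    refine setIntegral_eq_zero_of_forall_eq_zero ?_
    intro α hα
    rw [if_neg]
    intro h
    apply hm
    simp only [lt_min_iff] at h ⊢
    exact ⟨h.1.1, h.1.2.trans_le hα.2, h.2⟩

lemma LE_one {abar ubar v ubot utop K : ℝ} {f g : ℝ → ℝ} (ha : 0 < abar) (hu : 0 < ubar)
    (hv : 0 < v) (h1 : 0 ≤ ubot) (h2 : ubot ≤ utop) (h3 : utop ≤ v) (hK : 0 ≤ K)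
    (hf : IsDensityOn f abar) (hg : IsDensityOn g ubar)
    (hr : StrictAntiOn (rFun g) (Icc 0 ubar)) :
    LE' abar ubar v ubot utop K f g 1 =
      Nn f g (min v (min abar ubar)) - K * Dd f g (min v (min abar ubar)) := by
  have hi := box_integrable hf hg (qE ubar v ubot utop K g 1) _
    (qE_meas ubar v ubot utop K g hg 1).aestronglyMeasurable
    (fun p hp => qE_bdd hu hK hr 1 p hp.2)
  have hm : 0 < min v (min abar ubar) := lt_min hv (lt_min ha hu)
  rw [LE', ← boxint abar ubar ha.le hu.le _ hi, intervalIntegral.integral_of_le hu.le,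
    setIntegral_congr_fun measurableSet_Ioc
      (fun u hu0 => LE_one_inner (K := K) ha hu hv h1 h2 h3 hf hg u hu0),
    setIntegral_indicator measurableSet_Iio]
  have e3 : Ioc 0 ubar ∩ Iio (min v (min abar ubar)) = Ioo 0 (min v (min abar ubar)) := by
    ext x; simp only [mem_inter_iff, mem_Ioc, mem_Iio, mem_Ioo]
    constructor
    · rintro ⟨⟨_, _⟩, _⟩; constructor <;> assumption
    · rintro ⟨h, h'⟩
      exact ⟨⟨h, h'.le.trans ((min_le_right _ _).trans (min_le_right _ _))⟩, h'⟩
  rw [e3, ← integral_Ioc_eq_integral_Ioo, ← intervalIntegral.integral_of_le hm.le,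
    intervalIntegral.integral_sub (Nn_int hf hg _ _) ((Dd_int hf hg _ _).const_mul K),
    intervalIntegral.integral_const_mul]
  rfl

/-- The first-best objective gap is pointwise nonnegative. -/
lemma gap_nonneg {ubar v ubot utop ε α u : ℝ} (he : 0 ≤ ε) (he1 : ε ≤ 1) (hα : 0 ≤ α) :
    0 ≤ (min v α - u) * (aE ubar v ubot utop ε α u - aE ubar v ubot utop 0 α u) := by
  unfold aE PhiE
  rw [max_eq_left hα, sub_zero, one_mul, zero_mul, add_zero]
  set x := min (phiInd v ubot utop α) ubar with hx
  set y := min (min v α) ubar with hy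
  have hy1 : y ≤ min v α := min_le_left _ _
  have hx1 : x ≤ ubar := min_le_right _ _
  split_ifs with h h' h'
  · simp
  · have : u < y := by
      by_contra hc
      push Not at hc h'
      nlinarith [mul_nonneg he (sub_nonneg.2 hc), mul_nonneg (sub_nonneg.2 he1) (sub_nonneg.2 h')]
    nlinarith
  · have hyu : y ≤ u := by
      by_contra hc
      push Not at hc h
      rcases eq_or_lt_of_le he with h0 | h0
      · subst h0; linarith
      · nlinarith [mul_pos h0 (sub_pos.2 hc), mul_nonneg (sub_nonneg.2 he1) (sub_nonneg.2 h'.le)]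
    have : min v α ≤ u := by
      rcases min_le_iff.1 hyu with h4 | h4
      · exact h4
      · linarith
    nlinarith
  · simp

lemma J_lt {abar ubar v ubot utop : ℝ} {f g : ℝ → ℝ} (ha : 0 < abar) (hu : 0 < ubar)
    (hb : 0 < ubot) (h2 : ubot ≤ utop) (h3 : utop ≤ v)
    (hf : IsDensityOn f abar) (hg : IsDensityOn g ubar) (ε : ℝ) (he : 0 < ε) (he1 : ε ≤ 1)
    (a : ℝ → ℝ → ℝ) (hma : Measurable (Function.uncurry a)) (hmem : ∀ α u, a α u ∈ Icc (0:ℝ) 1)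
    (hae : ∀ᵐ p ∂(volume.restrict (Icc (0:ℝ) abar ×ˢ Icc (0:ℝ) ubar)),
      a p.1 p.2 = aE ubar v ubot utop 0 p.1 p.2) :
    J abar ubar v f g (fun α _ => α) a
      < J abar ubar v f g (fun α _ => α) (aE ubar v ubot utop ε) := by
  have hv : 0 < v := by linarith
  have hbound : ∀ (b : ℝ → ℝ → ℝ), (∀ α u, b α u ∈ Icc (0:ℝ) 1) →
      ∀ p ∈ Icc (0:ℝ) abar ×ˢ Icc (0:ℝ) ubar, |(min v p.1 - p.2) * b p.1 p.2| ≤ v + ubar := by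
    intro b hb p hp
    rw [abs_mul, abs_of_nonneg (hb p.1 p.2).1]
    have h1 : |min v p.1 - p.2| ≤ v + ubar := by
      have := min_le_left v p.1
      have : 0 ≤ min v p.1 := le_min hv.le hp.1.1
      rw [abs_le]; constructor <;> linarith [hp.2.1, hp.2.2]
    calc _ ≤ |min v p.1 - p.2| * 1 := mul_le_mul_of_nonneg_left (hb p.1 p.2).2 (abs_nonneg _)
      _ ≤ _ := by rw [mul_one]; exact h1
  have hma' : Measurable (fun p : ℝ × ℝ => a p.1 p.2) := hma
  have hmE := aE_meas ubar v ubot utop ε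
  have i1 := box_integrable hf hg (fun p => (min v p.1 - p.2) * a p.1 p.2) _
    (by fun_prop) (hbound a hmem)
  have i2 := box_integrable hf hg (fun p => (min v p.1 - p.2) * aE ubar v ubot utop ε p.1 p.2) _
    (by fun_prop) (hbound _ (aE_mem ubar v ubot utop ε))
  have e1 := boxint abar ubar ha.le hu.le _ i1
  have e2 := boxint abar ubar ha.le hu.le _ i2
  have j1 : J abar ubar v f g (fun α _ => α) a = ∫ p in Icc (0:ℝ) abar ×ˢ Icc (0:ℝ) ubar,
      f p.1 * g p.2 * ((min v p.1 - p.2) * a p.1 p.2) := by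
    rw [← e1]; simp only [J, mul_assoc]
  have j2 : J abar ubar v f g (fun α _ => α) (aE ubar v ubot utop ε) =
      ∫ p in Icc (0:ℝ) abar ×ˢ Icc (0:ℝ) ubar,
      f p.1 * g p.2 * ((min v p.1 - p.2) * aE ubar v ubot utop ε p.1 p.2) := by
    rw [← e2]; simp only [J, mul_assoc]
  have hbox := ae_restrict_mem (μ := volume) (measurableSet_Icc.prod measurableSet_Icc :
    MeasurableSet (Icc (0:ℝ) abar ×ˢ Icc (0:ℝ) ubar))
  have hnn : 0 ≤ᵐ[volume.restrict (Icc (0:ℝ) abar ×ˢ Icc (0:ℝ) ubar)] fun p : ℝ × ℝ =>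
      f p.1 * g p.2 * ((min v p.1 - p.2) * aE ubar v ubot utop ε p.1 p.2)
      - f p.1 * g p.2 * ((min v p.1 - p.2) * a p.1 p.2) := by
    filter_upwards [hbox, hae] with p hp hp2
    have := gap_nonneg (ubar := ubar) (v := v) (ubot := ubot) (utop := utop) (u := p.2)
      he.le he1 hp.1.1
    have := mul_nonneg (mul_nonneg (hf.nonneg p.1) (hg.nonneg p.2)) this
    simp only [Pi.zero_apply]
    rw [hp2]
    linarith
  rw [j1, j2, ← sub_pos, ← integral_sub i2 i1]
  refine lt_of_le_of_ne (integral_nonneg_of_ae hnn) (fun h0 => ?_)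
  have hz := (integral_eq_zero_iff_of_nonneg_ae hnn (i2.sub i1)).1 h0.symm
  have hall : ∀ᵐ p : ℝ × ℝ, p ∈ Icc (0:ℝ) abar ×ˢ Icc (0:ℝ) ubar →
      a p.1 p.2 = aE ubar v ubot utop 0 p.1 p.2 ∧
      f p.1 * g p.2 * ((min v p.1 - p.2) * aE ubar v ubot utop ε p.1 p.2)
      - f p.1 * g p.2 * ((min v p.1 - p.2) * a p.1 p.2) = 0 := by
    rw [← ae_restrict_iff' (measurableSet_Icc.prod measurableSet_Icc)]
    filter_upwards [hae, hz] with p h1 h2 using ⟨h1, h2⟩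
  set b := min ubot ubar with hbdef
  have hbpos : 0 < b := lt_min hb hu
  have hopen : IsOpen {p : ℝ × ℝ | 0 < p.1 ∧ p.1 < abar ∧ p.1 < b ∧
      (1 - ε) * b + ε * p.1 < p.2 ∧ p.2 < b} := by
    simp only [ofPred_and]
    refine IsOpen.inter ?_ (IsOpen.inter ?_ (IsOpen.inter ?_ (IsOpen.inter ?_ ?_))) <;>
      exact isOpen_lt (by fun_prop) (by fun_prop)
  have hne : {p : ℝ × ℝ | 0 < p.1 ∧ p.1 < abar ∧ p.1 < b ∧
      (1 - ε) * b + ε * p.1 < p.2 ∧ p.2 < b}.Nonempty := by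
    set x := min abar b / 2
    have hx : 0 < min abar b := lt_min ha hbpos
    have hx1 : x < abar := (half_lt_self hx).trans_le (min_le_left _ _)
    have hx2 : x < b := (half_lt_self hx).trans_le (min_le_right _ _)
    have : (1 - ε) * b + ε * x < b := by nlinarith
    obtain ⟨y, hy1, hy2⟩ := exists_between this
    exact ⟨(x, y), half_pos hx, hx1, hx2, hy1, hy2⟩
  obtain ⟨p, hp, ⟨p1, p2, p3, p4, p5⟩⟩ := (Measure.dense_of_ae hall).exists_mem_open hopen hne
  have hbu : b ≤ ubar := min_le_right _ _
  have hbb : b ≤ ubot := min_le_left _ _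
  have hpu : p.1 < p.2 := by nlinarith
  have hpb : p ∈ Icc (0:ℝ) abar ×ˢ Icc (0:ℝ) ubar := ⟨⟨p1.le, p2.le⟩, by linarith, by linarith⟩
  obtain ⟨q1, q2⟩ := hp hpb
  have hphi := phi_low h2 h3 p.1 (by linarith) (by linarith)
  have k0 : aE ubar v ubot utop 0 p.1 p.2 = 1 := by
    unfold aE PhiE
    rw [hphi, if_pos]
    linarith
  have k1 : aE ubar v ubot utop ε p.1 p.2 = 0 := by
    unfold aE PhiE
    rw [hphi, max_eq_left p1.le, min_eq_right (a := v) (by linarith),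
      min_eq_left (a := p.1) (by linarith), if_neg]
    linarith
  rw [q1, k0, k1, min_eq_right (by linarith)] at q2
  have := mul_pos (mul_pos (hf.pos _ hpb.1) (hg.pos _ hpb.2)) (sub_pos.2 hpu)
  linarith

/-- in the independent case, given the allocation-threshold constants
`u_bot ≤ u_top`, the optimal inspection rule is, almost everywhere, `c° = 1` on
`u_bot < u < ψ(α)` and `c° = 0` otherwise. -/
theorem inspection_threshold_independent
    (abar ubar v K : ℝ) (habar : 0 < abar) (hubar : 0 < ubar) (hv : 0 < v) (hK0 : 0 ≤ K)
    (f g : ℝ → ℝ)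
    (hf : IsDensityOn f abar) (hg : IsDensityOn g ubar)
    (hr : StrictAntiOn (rFun g) (Icc 0 ubar))
    (hK : Klow f g (fun u => u) v ≤ K)
    (a c : ℝ → ℝ → ℝ)
    (hopt : Optimal abar ubar v K f g (fun α _ => α) a c)
    (ubot utop : ℝ) (h1 : 0 ≤ ubot) (h2 : ubot ≤ utop) (h3 : utop ≤ v)
    (halloc : ∀ᵐ p : ℝ × ℝ ∂volume, p ∈ Icc (0:ℝ) abar ×ˢ Icc (0:ℝ) ubar →
      (p.2 < phiInd v ubot utop p.1 → a p.1 p.2 = 1) ∧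
      (phiInd v ubot utop p.1 < p.2 → a p.1 p.2 = 0)) :
    ∀ᵐ p : ℝ × ℝ ∂volume, p ∈ Icc (0:ℝ) abar ×ˢ Icc (0:ℝ) ubar →
      (ubot < p.2 ∧ p.2 < psiInd v ubot utop p.1 → c p.1 p.2 = 1) ∧
      (¬ (ubot < p.2 ∧ p.2 < psiInd v ubot utop p.1) → c p.1 p.2 = 0) := by
  classical
  obtain ⟨hfeas, hbest⟩ := hopt
  -- the cost of inspection is positive
  set m := min v (min abar ubar) with hm
  have hm0 : 0 < m := lt_min hv (lt_min habar hubar)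
  have hma : m ≤ abar := (min_le_right _ _).trans (min_le_left _ _)
  have hmu : m ≤ ubar := (min_le_right _ _).trans (min_le_right _ _)
  have hD := Dd_pos hm0 hma hmu hf hg
  have hN := Nn_pos hm0 hma hmu hf hg
  rw [Klow_eq habar hubar hf hg, ← hm] at hK
  have hKpos : 0 < K := (div_pos hN hD).trans_le hK
  have hNK : Nn f g m ≤ K * Dd f g m := (div_le_iff₀ hD).1 hK
  have hL1 : LE' abar ubar v ubot utop K f g 1 ≤ 0 := by
    rw [LE_one habar hubar hv h1 h2 h3 hK0 hf hg hr, ← hm]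
    linarith
  -- the allocation at `α = 0`
  have hstepA : ∀ u, ubot < u → u ≤ ubar → a 0 u = 0 := by
    intro u hu hu'
    have hopen : IsOpen {p : ℝ × ℝ | 0 < p.1 ∧ p.1 < abar ∧ p.1 < p.2 ∧ ubot < p.2 ∧ p.2 < u} := by
      simp only [ofPred_and]
      refine IsOpen.inter ?_ (IsOpen.inter ?_ (IsOpen.inter ?_ (IsOpen.inter ?_ ?_))) <;>
        exact isOpen_lt (by fun_prop) (by fun_prop)
    have hne : {p : ℝ × ℝ | 0 < p.1 ∧ p.1 < abar ∧ p.1 < p.2 ∧ ubot < p.2 ∧ p.2 < u}.Nonempty := by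
      obtain ⟨y, hy1, hy2⟩ := exists_between hu
      obtain ⟨x, hx1, hx2⟩ := exists_between (lt_min habar (h1.trans_lt hy1))
      exact ⟨(x, y), hx1, hx2.trans_le (min_le_left _ _), hx2.trans_le (min_le_right _ _), hy1, hy2⟩
    obtain ⟨p, hp, ⟨p1, p2, p3, p4, p5⟩⟩ := (Measure.dense_of_ae halloc).exists_mem_open hopen hne
    have hz : a p.1 p.2 = 0 :=
      (hp ⟨⟨p1.le, p2.le⟩, by linarith, by linarith⟩).2 ((phi_le h3 p.1).trans_lt (max_lt p4 p3))
    have q1 := hfeas.u_mono 0 u p.2 p5.le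
    have q2 := hfeas.α_mono0 p.1 p.2
    have q3 := (hfeas.mem_a 0 u).1
    linarith
  have hmb : MeasurableSet (Icc (0:ℝ) abar ×ˢ Icc (0:ℝ) ubar) :=
    measurableSet_Icc.prod measurableSet_Icc
  have hbox := ae_restrict_mem (μ := volume) hmb
  have hnull1 := ae_restrict_of_ae (s := Icc (0:ℝ) abar ×ˢ Icc (0:ℝ) ubar)
    (graph_null _ (phi_meas v ubot utop))
  have hnull2 := ae_restrict_of_ae (s := Icc (0:ℝ) abar ×ˢ Icc (0:ℝ) ubar)
    (graph_null (fun _ => ubot) measurable_const)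
  have hnull3 := ae_restrict_of_ae (s := Icc (0:ℝ) abar ×ˢ Icc (0:ℝ) ubar)
    (graph_null (fun _ => ubar) measurable_const)
  have hnull4 := ae_restrict_of_ae (s := Icc (0:ℝ) abar ×ˢ Icc (0:ℝ) ubar)
    (graph_null (fun _ => 0) measurable_const)
  rw [← ae_restrict_iff' hmb] at halloc ⊢
  -- explicit form of the allocation at `ε = 0`
  have hE0 : ∀ p : ℝ × ℝ, p.2 < ubar →
      aE ubar v ubot utop 0 p.1 p.2 = if p.2 < phiInd v ubot utop p.1 then 1 else 0 := by
    intro p hp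
    unfold aE PhiE
    simp only [sub_zero, one_mul, zero_mul, add_zero, lt_min_iff, hp, and_true]
  have hE00 : ∀ p : ℝ × ℝ, p.2 < ubar →
      aE ubar v ubot utop 0 0 p.2 = if p.2 < ubot then 1 else 0 := by
    intro p hp
    have := hE0 (0, p.2) hp
    rwa [phi_low h2 h3 0 h1 hv] at this
  have hae : ∀ᵐ p ∂(volume.restrict (Icc (0:ℝ) abar ×ˢ Icc (0:ℝ) ubar)),
      a p.1 p.2 = aE ubar v ubot utop 0 p.1 p.2 := by
    filter_upwards [hbox, halloc, hnull1, hnull3] with p hp ha n1 n3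
    rw [hE0 p (lt_of_le_of_ne hp.2.2 n3)]
    split_ifs with h
    · exact ha.1 h
    · exact ha.2 (lt_of_le_of_ne (not_lt.1 h) (Ne.symm n1))
  -- inspection above `ubot`
  have hcup : ∀ᵐ p ∂(volume.restrict (Icc (0:ℝ) abar ×ˢ Icc (0:ℝ) ubar)), ubot < p.2 →
      c p.1 p.2 = aE ubar v ubot utop 0 p.1 p.2 - aE ubar v ubot utop 0 0 p.2 := by
    filter_upwards [hbox, hae, hnull3] with p hp ha n3 hlt
    have hz := hstepA p.2 hlt hp.2.2
    have hpu := lt_of_le_of_ne hp.2.2 n3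
    have q1 := hfeas.ic p.1 p.2
    have q2 := hfeas.inspect p.1 p.2
    have q3 := hfeas.mem_c p.1 p.2
    rw [hE00 p hpu, if_neg (not_lt.2 hlt.le), sub_zero, ← ha]
    rw [hE0 p hpu] at ha
    rw [hz] at q1
    split_ifs at ha
    · rw [ha] at q1 q2 ⊢
      linarith [q3.2]
    · rw [ha] at q2 ⊢
      linarith [q3.1]
  have hcge : ∀ᵐ p ∂(volume.restrict (Icc (0:ℝ) abar ×ˢ Icc (0:ℝ) ubar)),
      0 ≤ c p.1 p.2 - (aE ubar v ubot utop 0 p.1 p.2 - aE ubar v ubot utop 0 0 p.2) := by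
    filter_upwards [hbox, hcup, hnull2, hnull3] with p hp hc n2 n3
    rcases lt_or_gt_of_ne n2 with h | h
    · have hpu := lt_of_le_of_ne hp.2.2 n3
      rw [hE0 p hpu, hE00 p hpu, if_pos h, if_pos (h.trans_le (phi_ge h2 _))]
      linarith [(hfeas.mem_c p.1 p.2).1]
    · rw [hc h]; linarith
  have hceq : ∀ᵐ p ∂(volume.restrict (Icc (0:ℝ) abar ×ˢ Icc (0:ℝ) ubar)),
      c p.1 p.2 = aE ubar v ubot utop 0 p.1 p.2 - aE ubar v ubot utop 0 0 p.2 := by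
    rcases eq_or_lt_of_le h1 with hb | hb
    · filter_upwards [hbox, hcup, hnull4] with p hp hc n4
      exact hc (hb ▸ lt_of_le_of_ne hp.2.1 (Ne.symm n4))
    have hL0 : LE' abar ubar v ubot utop K f g 0 ≤ 0 := by
      by_contra hcon
      push Not at hcon
      obtain ⟨ε, ⟨he0, he1⟩, hε⟩ : (0:ℝ) ∈ (LE' abar ubar v ubot utop K f g) '' Icc 0 1 :=
        intermediate_value_Icc' zero_le_one
          (LE_cont hubar hK0 hf hg hr).continuousOn ⟨hL1, hcon.le⟩
      have hepos : 0 < ε := by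
        refine lt_of_le_of_ne he0 (fun h => ?_)
        rw [← h] at hε
        linarith
      have hfe := feasE habar hubar hv h1 h2 h3 hf hg hr ε he0 he1 hε
      have := hbest _ _ hfe
      have := J_lt habar hubar hb h2 h3 hf hg ε hepos he1 a hfeas.meas_a hfeas.mem_a hae
      linarith
    have ma : Measurable (fun p : ℝ × ℝ => a p.1 p.2) := hfeas.meas_a
    have mc : Measurable (fun p : ℝ × ℝ => c p.1 p.2) := hfeas.meas_c
    have mr := rFun_meas hg
    have mE := aE_meas ubar v ubot utop 0
    have mE0 := aE0_meas ubar v ubot utop 0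
    have memE := aE_mem ubar v ubot utop 0
    have i1 := box_integrable hf hg (fun p => rFun g p.2 * a p.1 p.2) _
      (by fun_prop) (fun p hp => ra_bdd hubar hr _ _ hp.2 (hfeas.mem_a _ _))
    have i2 := box_integrable hf hg (fun p => c p.1 p.2) 1 (by fun_prop) (fun p hp => by
        rw [abs_le]
        constructor <;> linarith [(hfeas.mem_c p.1 p.2).1, (hfeas.mem_c p.1 p.2).2])
    have i3 := box_integrable hf hg (fun p => c p.1 p.2 -
        (aE ubar v ubot utop 0 p.1 p.2 - aE ubar v ubot utop 0 0 p.2)) 2 (by fun_prop) (fun p hp => by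
        rw [abs_le]
        constructor <;> linarith [(hfeas.mem_c p.1 p.2).1, (hfeas.mem_c p.1 p.2).2,
          (memE p.1 p.2).1, (memE p.1 p.2).2, (memE 0 p.2).1, (memE 0 p.2).2])
    have e1 := boxint abar ubar habar.le hubar.le _ i1
    have e2 := boxint abar ubar habar.le hubar.le _ i2
    have hbud := hfeas.budget
    simp only [← mul_assoc] at e1
    rw [e1, e2] at hbud
    simp only [← mul_assoc] at i1
    have hLeq : LE' abar ubar v ubot utop K f g 0 =
        K * ∫ p in Icc (0:ℝ) abar ×ˢ Icc (0:ℝ) ubar, f p.1 * g p.2 * (c p.1 p.2 -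
        (aE ubar v ubot utop 0 p.1 p.2 - aE ubar v ubot utop 0 0 p.2)) := by
      have s1 : LE' abar ubar v ubot utop K f g 0 =
          ∫ p in Icc (0:ℝ) abar ×ˢ Icc (0:ℝ) ubar,
            ((f p.1 * g p.2 * rFun g p.2 * a p.1 p.2 - K * (f p.1 * g p.2 * c p.1 p.2)) +
            K * (f p.1 * g p.2 * (c p.1 p.2 -
              (aE ubar v ubot utop 0 p.1 p.2 - aE ubar v ubot utop 0 0 p.2)))) := by
        unfold LE' qE
        refine integral_congr_ae ?_
        filter_upwards [hae] with p hp
        rw [hp]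
        ring
      have i4 : IntegrableOn (fun p : ℝ × ℝ => f p.1 * g p.2 * rFun g p.2 * a p.1 p.2
          - K * (f p.1 * g p.2 * c p.1 p.2)) (Icc 0 abar ×ˢ Icc 0 ubar) :=
        Integrable.sub i1 (i2.const_mul K)
      rw [s1, integral_add i4 (i3.const_mul K),
        integral_sub i1 (i2.const_mul K), integral_const_mul, integral_const_mul, hbud]
      ring
    have hnn : 0 ≤ᵐ[volume.restrict (Icc (0:ℝ) abar ×ˢ Icc (0:ℝ) ubar)] fun p : ℝ × ℝ =>
        f p.1 * g p.2 * (c p.1 p.2 -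
        (aE ubar v ubot utop 0 p.1 p.2 - aE ubar v ubot utop 0 0 p.2)) := by
      filter_upwards [hcge] with p hp
      exact mul_nonneg (mul_nonneg (hf.nonneg _) (hg.nonneg _)) hp
    have hI0 : ∫ p in Icc (0:ℝ) abar ×ˢ Icc (0:ℝ) ubar, f p.1 * g p.2 * (c p.1 p.2 -
        (aE ubar v ubot utop 0 p.1 p.2 - aE ubar v ubot utop 0 0 p.2)) = 0 := by
      refine le_antisymm ?_ (integral_nonneg_of_ae hnn)
      rw [hLeq] at hL0
      by_contra hcon
      push Not at hcon
      have := mul_pos hKpos hcon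
      linarith
    have hz := (integral_eq_zero_iff_of_nonneg_ae hnn i3).1 hI0
    filter_upwards [hz, hbox] with p hp hpb
    have hpos := mul_pos (hf.pos _ hpb.1) (hg.pos _ hpb.2)
    rcases mul_eq_zero.1 hp with h | h
    · exact absurd h hpos.ne'
    · linarith
  filter_upwards [hbox, hceq, hnull2, hnull3] with p hp hc n2 n3
  have hpu := lt_of_le_of_ne hp.2.2 n3
  rw [hc, hE0 p hpu, hE00 p hpu]
  have hp0 := hp.2.1
  have hge := phi_ge (v := v) h2 p.1
  rcases lt_or_gt_of_ne n2 with h | h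
  · rw [if_pos h, if_pos (h.trans_le hge)]
    exact ⟨fun h' => absurd h'.1 (not_lt.2 h.le), fun _ => sub_self _⟩
  · rw [if_neg (not_lt.2 h.le)]
    have key : p.2 < psiInd v ubot utop p.1 ↔ p.2 < phiInd v ubot utop p.1 := by
      unfold psiInd phiInd
      split_ifs
      · rfl
      · rfl
      · constructor <;> intro h' <;> linarith
    rw [key]
    constructor
    · rintro ⟨_, h'⟩; rw [if_pos h']; norm_num
    · intro h'
      rw [if_neg (fun h4 => h' ⟨h, h4⟩)]; norm_num

end Spectrum
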